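/- Let K ⊆ ℝ² be a Minkowski centered convex body with s(K) > φ. Then τ(K) ≤ c(s(K)). -/

import Mathlib

open scoped Pointwise RealInnerProductSpace
open Set

noncomputable section

abbrev E2 := EuclideanSpace ℝ (Fin 2)

/-- A convex body: compact convex set with nonempty interior. -/
def IsConvexBody (K : Set E2) : Prop :=
  Convex ℝ K ∧ IsCompact K ∧ (interior K).Nonempty

/-- circumradius `R(K,C)` -/
def circum (K C : Set E2) : ℝ :=
  sInf {ρ : ℝ | 0 < ρ ∧ ∃ t : E2, K ⊆ ρ • C + {t}}

/-- inradius `r(K,C)` -/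
def inrad (K C : Set E2) : ℝ :=
  sSup {ρ : ℝ | 0 < ρ ∧ ∃ t : E2, ρ • C + {t} ⊆ K}

/-- width `w(K,C)` -/
def widthB (K C : Set E2) : ℝ := 2 * inrad (K - K) (C - C)

/-- diameter `D(K,C)` -/
def diamB (K C : Set E2) : ℝ := 2 * circum (K - K) (C - C)

/-- Minkowski asymmetry `s(K)` -/
def minkAsym (K : Set E2) : ℝ :=
  sInf {ρ : ℝ | 0 < ρ ∧ ∃ c : E2, K - {c} ⊆ ρ • ({c} - K)}

/-- `K` is Minkowski centered -/
def MinkCentered (K : Set E2) : Prop := K ⊆ minkAsym K • (-K)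

/-- `τ(K)`: smallest `ρ > 0` with `K ∩ (-K) ⊆ ρ • ((K-K)/2)` -/
def tauB (K : Set E2) : ℝ :=
  sInf {ρ : ℝ | 0 < ρ ∧ K ∩ (-K) ⊆ ρ • ((2:ℝ)⁻¹ • (K - K))}

/-- golden ratio -/
def phiR : ℝ := (1 + Real.sqrt 5) / 2

def cExpr2 (s : ℝ) : ℝ :=
  (s^2+1)^2 / ((s^2-1) * (s^2+2*s-1+2*Real.sqrt (s*(s^2-1))))

def cExpr3 (s : ℝ) : ℝ := 2*(s^2-2*s-1) / ((s-3)*(s+1))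

/-- `ŝ`: the unique `s ∈ (φ,2)` where the two expressions agree. -/
def sHat : ℝ := sInf {s : ℝ | phiR < s ∧ s < 2 ∧ cExpr2 s = cExpr3 s}

def cFun (s : ℝ) : ℝ :=
  if s ≤ phiR then 1 else if s ≤ sHat then cExpr2 s else cExpr3 s

/-- polar body -/
def polarBody (K : Set E2) : Set E2 := {y | ∀ x ∈ K, (inner ℝ x y : ℝ) ≤ 1}

/-- `γ(K)` -/
def gammaB (K : Set E2) : ℝ :=
  sInf {ρ : ℝ | 0 < ρ ∧
    polarBody ((2:ℝ)⁻¹ • (polarBody K - polarBody K)) ⊆ ρ • convexHull ℝ (K ∪ -K)}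

/-- positive hull of two points -/
def posHull2 (a b : E2) : Set E2 := {x | ∃ α β : ℝ, 0 ≤ α ∧ 0 ≤ β ∧ x = α • a + β • b}

/-- asymmetry point of `K`: a point of `bd(K) ∩ bd(−(1/s(K))·K)` -/
def IsAsymPoint (K : Set E2) (p : E2) : Prop :=
  p ∈ frontier K ∧ p ∈ frontier ((-(minkAsym K)⁻¹) • K)

/-- a well-spread triple of asymmetry points -/
def WellSpread (K : Set E2) (p1 p2 p3 : E2) : Prop :=
  IsAsymPoint K p1 ∧ IsAsymPoint K p2 ∧ IsAsymPoint K p3 ∧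
  ∃ a1 a2 a3 : E2, a1 ≠ 0 ∧ a2 ≠ 0 ∧ a3 ≠ 0 ∧
    (∀ x ∈ K, (inner ℝ a1 x : ℝ) ≤ inner ℝ a1 p1) ∧
    (∀ x ∈ K, (inner ℝ a2 x : ℝ) ≤ inner ℝ a2 p2) ∧
    (∀ x ∈ K, (inner ℝ a3 x : ℝ) ≤ inner ℝ a3 p3) ∧
    (0:E2) ∈ interior (convexHull ℝ {p1, p2, p3}) ∧
    (0:E2) ∈ convexHull ℝ {a1, a2, a3}

/-- two points of `bd(K) ∩ bd(-K)` are consecutive -/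
def Consecutive (K : Set E2) (z1 z2 : E2) : Prop :=
  ¬ ∃ z, z ∈ frontier K ∩ frontier (-K) ∧ z ∈ interior (posHull2 z1 z2)

/-- point of the plane from coordinates -/
def pt (x y : ℝ) : E2 := (WithLp.equiv 2 (Fin 2 → ℝ)).symm ![x, y]

/-- the golden house -/
def goldenHouse : Set E2 :=
  convexHull ℝ {pt 1 0, pt (-1) 0, pt 1 (-1), pt (-1) (-1), pt 0 phiR}

/-!
By Helly's theorem and separation, optimality of `s = s(K)` yields points `p₀, p₁, p₂ ∈ K` on the
boundary of `-s K`, with outer normals `u₀, u₁, u₂` satisfying a positive linear relation. Let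
`x ∈ K ∩ -K`. Up to relabelling and replacing `x` by `-x`, the line `ℝ x` has `p₁` and `p₂` on one
side. Parallel to `x` there is then a chord of `K` from one of these two points to the segment
joining the other one to `x` or `-x`, and Cramer's rule expresses its length through the values
`uᵢ x` and `uᵢ pⱼ`. Minimising it under the constraints `-1 ≤ uᵢ ≤ s` on `K` and `|uᵢ x| ≤ 1` shows
that the chord is at least `2 / c(s)` times as long as `x`. The two branches of `c` above `φ` are
the cases where the minimum is attained at a critical point (`s ≤ ŝ`) or at the vertex
`u₀ x = 2 - s` of the feasible region (`s > ŝ`).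
-/

/-! ### The function `c` -/

lemma phiR_sq : phiR ^ 2 = phiR + 1 := Real.goldenRatio_sq

lemma one_lt_phiR : 1 < phiR := Real.one_lt_goldenRatio

lemma add_one_lt_sq_of_phiR_lt {s : ℝ} (hs : phiR < s) : s + 1 < s ^ 2 := by
  nlinarith [phiR_sq, one_lt_phiR]

lemma cExpr2_mul {s : ℝ} (hs : 1 < s) :
    cExpr2 s * (s ^ 2 - 1) = s ^ 2 + 2 * s - 1 - 2 * √(s * (s ^ 2 - 1)) := by
  have hs_sq : 0 < s ^ 2 - 1 := by nlinarith
  have hsqrt : √(s * (s ^ 2 - 1)) ^ 2 = s * (s ^ 2 - 1) := Real.sq_sqrt (by positivity)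
  have hden : 0 < s ^ 2 + 2 * s - 1 + 2 * √(s * (s ^ 2 - 1)) := by
    linarith [Real.sqrt_nonneg (s * (s ^ 2 - 1))]
  rw [cExpr2, div_mul_eq_mul_div, div_eq_iff (by positivity)]
  linear_combination 4 * (s ^ 2 - 1) * hsqrt

lemma cExpr3_mul {s : ℝ} (hs₁ : 1 < s) (hs₃ : s < 3) :
    cExpr3 s * ((3 - s) * (s + 1)) = 2 * (1 + 2 * s - s ^ 2) := by
  have h₁ : s - 3 ≠ 0 := by linarith
  have h₂ : s + 1 ≠ 0 := by linarith
  rw [cExpr3]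
  field_simp
  ring

lemma mul_cExpr2_sub_cExpr3 {s : ℝ} (hs₁ : 1 < s) (hs₃ : s < 3) :
    s * (s ^ 2 - 1) * (3 - s) * (cExpr2 s - cExpr3 s) =
      (√(s * (s ^ 2 - 1)) - s * (3 - s)) ^ 2 := by
  have hsqrt : √(s * (s ^ 2 - 1)) ^ 2 = s * (s ^ 2 - 1) := Real.sq_sqrt (by nlinarith)
  linear_combination s * (3 - s) * cExpr2_mul hs₁ - s * (s - 1) * cExpr3_mul hs₁ hs₃ - hsqrt

lemma cExpr2_eq_cExpr3_iff {s : ℝ} (hs₁ : 1 < s) (hs₃ : s < 3) :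
    cExpr2 s = cExpr3 s ↔ s * (3 - s) ^ 2 = s ^ 2 - 1 := by
  have hs_sq : 0 < s ^ 2 - 1 := by nlinarith
  have hfactor : s * (s ^ 2 - 1) * (3 - s) ≠ 0 :=
    (mul_pos (by positivity) (by linarith)).ne'
  rw [← sub_eq_zero, ← mul_eq_zero_iff_left hfactor, mul_cExpr2_sub_cExpr3 hs₁ hs₃,
    sq_eq_zero_iff, sub_eq_zero,
    Real.sqrt_eq_iff_eq_sq (by positivity) (mul_nonneg (by linarith) (by linarith))]
  constructor <;> intro h
  · exact mul_left_cancel₀ (by positivity : s ≠ 0) (by linear_combination -h)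
  · linear_combination -s * h

lemma exists_cExpr2_eq_cExpr3 : {s | phiR < s ∧ s < 2 ∧ cExpr2 s = cExpr3 s}.Nonempty := by
  have hcont : ContinuousOn (fun s : ℝ ↦ s ^ 2 - 1 - s * (3 - s) ^ 2) (Icc phiR 2) := by fun_prop
  have hneg : phiR ^ 2 - 1 - phiR * (3 - phiR) ^ 2 < 0 := by
    nlinarith [phiR_sq, one_lt_phiR]
  obtain ⟨s, ⟨hs, hs₂⟩, hzero⟩ :=
    intermediate_value_Ioo Real.goldenRatio_lt_two.le hcont ⟨hneg, by norm_num⟩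
  refine ⟨s, hs, hs₂, (cExpr2_eq_cExpr3_iff (one_lt_phiR.trans hs) (by linarith)).2 ?_⟩
  linear_combination -hzero

lemma mul_sq_le_of_sHat_lt {s : ℝ} (hs : sHat < s) (hs₃ : s ≤ 3) :
    s * (3 - s) ^ 2 ≤ s ^ 2 - 1 := by
  obtain ⟨t, ⟨ht, ht₂, heq⟩, hts⟩ := exists_lt_of_csInf_lt exists_cExpr2_eq_cExpr3 hs
  have ht₁ : 1 < t := one_lt_phiR.trans ht
  rw [cExpr2_eq_cExpr3_iff ht₁ (by linarith)] at heq
  have hsq : (3 - s) ^ 2 ≤ (3 - t) ^ 2 := by gcongr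
  -- The equation for `t` says `(3 - t) ^ 2 = t - 1 / t`, whose right side is increasing.
  have hmul : t * (s * (3 - s) ^ 2) ≤ t * (s ^ 2 - 1) :=
    calc t * (s * (3 - s) ^ 2) ≤ t * (s * (3 - t) ^ 2) := by gcongr; linarith
      _ = s * (t ^ 2 - 1) := by linear_combination s * heq
      _ ≤ t * (s ^ 2 - 1) := by nlinarith [mul_pos (by linarith : 0 < s) (by linarith : 0 < t)]
  exact le_of_mul_le_mul_left hmul (by linarith)

lemma mul_le_cExpr2_mul {s : ℝ} (hs : 1 < s) (e : ℝ) :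
    (s - e) * (1 + e * s) ≤ cExpr2 s * ((s ^ 2 - 1) * (1 + e)) := by
  have hsqrt : √(s * (s ^ 2 - 1)) ^ 2 = s * (s ^ 2 - 1) := Real.sq_sqrt (by nlinarith)
  have hdiff : s * (cExpr2 s * ((s ^ 2 - 1) * (1 + e)) - (s - e) * (1 + e * s)) =
      (√(s * (s ^ 2 - 1)) - s * (1 + e)) ^ 2 := by
    linear_combination s * (1 + e) * cExpr2_mul hs - hsqrt
  nlinarith [sq_nonneg (√(s * (s ^ 2 - 1)) - s * (1 + e))]

lemma mul_le_cExpr3_mul {s e : ℝ} (hs₁ : 1 < s) (hs₃ : s < 3)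
    (hs : s * (3 - s) ^ 2 ≤ s ^ 2 - 1) (he : e ≤ 2 - s) :
    (s - e) * (1 + e * s) ≤ cExpr3 s * ((s ^ 2 - 1) * (1 + e)) := by
  have hs_sub : 0 < 3 - s := by linarith
  have hdiff : (3 - s) * (cExpr3 s * ((s ^ 2 - 1) * (1 + e)) - (s - e) * (1 + e * s)) =
      (2 - s - e) * (s ^ 2 - 1 - s * (3 - s) * (1 + e)) := by
    linear_combination (s - 1) * (1 + e) * cExpr3_mul hs₁ hs₃
  have hfactor : s * (3 - s) * (1 + e) ≤ s ^ 2 - 1 :=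
    calc s * (3 - s) * (1 + e) ≤ s * (3 - s) * (3 - s) := by gcongr; linarith
      _ = s * (3 - s) ^ 2 := by ring
      _ ≤ s ^ 2 - 1 := hs
  have hprod := mul_nonneg (by linarith : 0 ≤ 2 - s - e) (sub_nonneg.2 hfactor)
  rw [← hdiff] at hprod
  exact sub_nonneg.1 (nonneg_of_mul_nonneg_right hprod hs_sub)

lemma mul_le_cFun_mul {s e : ℝ} (hs : phiR < s) (hs₂ : s ≤ 2) (he : e ≤ 2 - s) :
    (s - e) * (1 + e * s) ≤ cFun s * ((s ^ 2 - 1) * (1 + e)) := by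
  have hs₁ : 1 < s := one_lt_phiR.trans hs
  rw [cFun, if_neg hs.not_ge]
  split_ifs with hsHat
  · exact mul_le_cExpr2_mul hs₁ e
  · exact mul_le_cExpr3_mul hs₁ (by linarith)
      (mul_sq_le_of_sHat_lt (not_le.1 hsHat) (by linarith)) he

lemma two_mul_le_cFun_mul {s : ℝ} (hs : phiR < s) (hs₂ : s ≤ 2) :
    2 * (1 + 2 * s - s ^ 2) ≤ cFun s * ((s + 1) * (3 - s)) := by
  have hs₁ : 0 < s - 1 := sub_pos.2 (one_lt_phiR.trans hs)
  refine le_of_mul_le_mul_left ?_ hs₁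
  linear_combination mul_le_cFun_mul hs hs₂ le_rfl

lemma two_le_cFun_mul {s : ℝ} (hs : phiR < s) (hs₂ : s ≤ 2) : 2 ≤ cFun s * (1 + s) := by
  have hs₁ : 1 < s := one_lt_phiR.trans hs
  refine le_of_mul_le_mul_right ?_ (by linarith : 0 < 3 - s)
  nlinarith [two_mul_le_cFun_mul hs hs₂]

lemma cFun_pos {s : ℝ} (hs : phiR < s) (hs₂ : s ≤ 2) : 0 < cFun s := by
  have hs₁ : 1 < s := one_lt_phiR.trans hs
  exact pos_of_mul_pos_left (two_pos.trans_le (two_le_cFun_mul hs hs₂)) (by linarith)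

lemma two_mul_le_cFun_mul_of_mul_le {s a d : ℝ} (hs : phiR < s) (hs₂ : s ≤ 2) (ha : 0 ≤ a)
    (hd : s * a ≤ d) : 2 * a ≤ cFun s * (d + a) :=
  have hc := cFun_pos hs hs₂
  calc 2 * a ≤ cFun s * (1 + s) * a := mul_le_mul_of_nonneg_right (two_le_cFun_mul hs hs₂) ha
    _ = cFun s * (s * a + a) := by ring
    _ ≤ cFun s * (d + a) := by gcongr

/-! ### The extremal inequality -/

lemma two_mul_le_cFun_mul_of_le_two_sub {s a b : ℝ} (hs : phiR < s) (hs₂ : s ≤ 2)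
    (ha : a ≤ 2 - s) (hb : 0 ≤ b) (hb₁ : b ≤ 1) (hsa : s * a ≤ 1) :
    2 * ((s - a) * (s * a + b)) ≤ cFun s * ((s ^ 2 - 1) * (1 + a) * (1 + b)) := by
  have hs₁ : 1 < s := one_lt_phiR.trans hs
  have hsum : 2 * (s * a + b) ≤ (1 + a * s) * (1 + b) := by
    linear_combination mul_nonneg (sub_nonneg.2 hsa) (sub_nonneg.2 hb₁)
  calc 2 * ((s - a) * (s * a + b)) = (s - a) * (2 * (s * a + b)) := by ring
    _ ≤ (s - a) * ((1 + a * s) * (1 + b)) := mul_le_mul_of_nonneg_left hsum (by linarith)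
    _ = (s - a) * (1 + a * s) * (1 + b) := by ring
    _ ≤ cFun s * ((s ^ 2 - 1) * (1 + a)) * (1 + b) :=
      mul_le_mul_of_nonneg_right (mul_le_cFun_mul hs hs₂ ha) (by linarith)
    _ = cFun s * ((s ^ 2 - 1) * (1 + a) * (1 + b)) := by ring

lemma two_mul_le_cFun_mul_of_two_sub_le {s a b : ℝ} (hs : phiR < s) (hs₂ : s ≤ 2) (ha : 2 - s ≤ a)
    (hb : 0 ≤ b) (hsa : s * a ≤ 1) (hab : (s - 1) * b ≤ 1 - a) :
    2 * ((s - a) * (s * a + b)) ≤ cFun s * ((s ^ 2 - 1) * (1 + a) * (1 + b)) := by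
  have hs₁ : 1 < s := one_lt_phiR.trans hs
  have hb_max : (s - a) * (s * a + b) ≤ (1 + a * (s ^ 2 - s - 1)) * (1 + b) := by
    linear_combination mul_nonneg (sub_nonneg.2 hsa) (sub_nonneg.2 hab)
  have ha_min : 2 * (1 + a * (s ^ 2 - s - 1)) ≤ cFun s * ((s ^ 2 - 1) * (1 + a)) := by
    refine le_of_mul_le_mul_left ?_ (by linarith : 0 < 3 - s)
    have hc := mul_le_mul_of_nonneg_right (two_mul_le_cFun_mul hs hs₂)
      (mul_nonneg (by linarith) (by linarith) : 0 ≤ (s - 1) * (1 + a))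
    have hdiff : 0 ≤ (a - (2 - s)) * ((2 - s) * (1 + s)) :=
      mul_nonneg (by linarith) (mul_nonneg (by linarith) (by linarith))
    linear_combination hc + 2 * hdiff
  calc 2 * ((s - a) * (s * a + b)) ≤ 2 * (1 + a * (s ^ 2 - s - 1)) * (1 + b) := by linarith
    _ ≤ cFun s * ((s ^ 2 - 1) * (1 + a)) * (1 + b) := by gcongr
    _ = cFun s * ((s ^ 2 - 1) * (1 + a) * (1 + b)) := by ring

lemma two_mul_le_cFun_mul_of_le_one {s a b y : ℝ} (hs : phiR < s) (hs₂ : s ≤ 2) (ha : 0 ≤ a)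
    (hb : 0 ≤ b) (hb₁ : b ≤ 1) (hy : 0 < y) (hy₁ : y ≤ 1) (hsa : s * a ≤ y)
    (hab : (s - 1) * b ≤ y - a) :
    2 * ((s * y - a) * (s * a + b)) ≤ cFun s * ((s ^ 2 - 1) * (1 + a) * (b + y)) := by
  have hs₁ : 1 < s := one_lt_phiR.trans hs
  have hy_one : 2 * ((s - a) * (s * a + b)) ≤ cFun s * ((s ^ 2 - 1) * (1 + a) * (1 + b)) := by
    rcases le_total a (2 - s) with ha₂ | ha₂
    · exact two_mul_le_cFun_mul_of_le_two_sub hs hs₂ ha₂ hb hb₁ (hsa.trans hy₁)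
    · exact two_mul_le_cFun_mul_of_two_sub_le hs hs₂ ha₂ hb (hsa.trans hy₁) (by linarith)
  have hmono : (s * y - a) * (1 + b) ≤ (s - a) * (b + y) := by
    nlinarith [mul_nonneg (sub_nonneg.2 hy₁) (by positivity : 0 ≤ s * b + a)]
  refine le_of_mul_le_mul_right ?_ (by linarith : 0 < 1 + b)
  calc 2 * ((s * y - a) * (s * a + b)) * (1 + b)
      = 2 * (s * a + b) * ((s * y - a) * (1 + b)) := by ring
    _ ≤ 2 * (s * a + b) * ((s - a) * (b + y)) := by gcongr
    _ = 2 * ((s - a) * (s * a + b)) * (b + y) := by ring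
    _ ≤ cFun s * ((s ^ 2 - 1) * (1 + a) * (1 + b)) * (b + y) := by gcongr
    _ = cFun s * ((s ^ 2 - 1) * (1 + a) * (b + y)) * (1 + b) := by ring

/-! ### The chord inequality -/

lemma sub_one_mul_le {s a b d : ℝ} (hs : 0 < s) (ha : s * a ≤ b + d) (hd : s * d ≤ a + b) :
    (s - 1) * a ≤ b := by
  refine le_of_mul_le_mul_left ?_ (by linarith : 0 < s + 1)
  linear_combination s * ha + hd

/-- Coordinates of a point `x ∈ K ∩ -K` with respect to a contact frame `(w, u, p)` of `K` indexed
by `Fin 3` (see `IsContactFrame`): `wᵢ` are the weights, `x₀ = u₀ x`, `x₁ = u₁ x`, `y = -u₂ x`,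
`α = -u₀ p₁` and `β = -u₀ p₂`. The last inequality says that the line `ℝ x` does not separate `p₁`
from `p₂`. -/
structure ChordData (s w₀ w₁ w₂ x₀ x₁ y α β : ℝ) : Prop where
  phiR_lt : phiR < s
  w₀_pos : 0 < w₀
  w₁_pos : 0 < w₁
  w₂_pos : 0 < w₂
  mul_w₀_le : s * w₀ ≤ w₁ + w₂
  mul_w₁_le : s * w₁ ≤ w₀ + w₂
  mul_w₂_le : s * w₂ ≤ w₀ + w₁
  x₀_nonneg : 0 ≤ x₀
  x₁_nonneg : 0 ≤ x₁
  x₁_le_one : x₁ ≤ 1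
  y_pos : 0 < y
  y_le_one : y ≤ 1
  sum_eq : w₀ * x₀ + w₁ * x₁ = w₂ * y
  α_le_one : α ≤ 1
  β_le_one : β ≤ 1
  sub_le_α : w₁ * s - w₂ ≤ w₀ * α
  mul_x₀_le : s * x₀ ≤ β * y

namespace ChordData

variable {s w₀ w₁ w₂ x₀ x₁ y α β : ℝ}

lemma one_lt (h : ChordData s w₀ w₁ w₂ x₀ x₁ y α β) : 1 < s := one_lt_phiR.trans h.phiR_lt

lemma pos (h : ChordData s w₀ w₁ w₂ x₀ x₁ y α β) : 0 < s := one_pos.trans h.one_lt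

lemma le_two (h : ChordData s w₀ w₁ w₂ x₀ x₁ y α β) : s ≤ 2 := by
  have hsum : 0 < w₀ + w₁ + w₂ := add_pos (add_pos h.w₀_pos h.w₁_pos) h.w₂_pos
  refine le_of_mul_le_mul_right ?_ hsum
  linear_combination h.mul_w₀_le + h.mul_w₁_le + h.mul_w₂_le

lemma sub_one_mul_w₂_le (h : ChordData s w₀ w₁ w₂ x₀ x₁ y α β) : (s - 1) * w₂ ≤ w₁ :=
  sub_one_mul_le h.pos (h.mul_w₂_le.trans_eq (add_comm ..)) (h.mul_w₀_le.trans_eq (add_comm ..))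

lemma sub_one_mul_w₀_le (h : ChordData s w₀ w₁ w₂ x₀ x₁ y α β) : (s - 1) * w₀ ≤ w₂ :=
  sub_one_mul_le h.pos (h.mul_w₀_le.trans_eq (add_comm ..)) h.mul_w₁_le

lemma mul_x₀_le_y (h : ChordData s w₀ w₁ w₂ x₀ x₁ y α β) : s * x₀ ≤ y :=
  h.mul_x₀_le.trans (mul_le_of_le_one_left h.y_pos.le h.β_le_one)

lemma x₁_pos (h : ChordData s w₀ w₁ w₂ x₀ x₁ y α β) : 0 < x₁ := by
  refine h.x₁_nonneg.lt_of_ne' fun hx₁ ↦ ?_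
  have hs := h.one_lt
  have hy : w₂ * (s * y) ≤ w₀ * y :=
    calc w₂ * (s * y) = w₀ * (s * x₀) := by linear_combination s * w₁ * hx₁ - s * h.sum_eq
      _ ≤ w₀ * y := mul_le_mul_of_nonneg_left h.mul_x₀_le_y h.w₀_pos.le
  have hw : s * w₂ ≤ w₀ := le_of_mul_le_mul_right (by linarith) h.y_pos
  have hw₀ : s * (s - 1) * w₀ ≤ 1 * w₀ := by nlinarith [h.sub_one_mul_w₀_le]
  linarith [le_of_mul_le_mul_right hw₀ h.w₀_pos, add_one_lt_sq_of_phiR_lt h.phiR_lt]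

lemma sub_one_mul_x₁_le (h : ChordData s w₀ w₁ w₂ x₀ x₁ y α β) : (s - 1) * x₁ ≤ y - x₀ := by
  refine le_of_mul_le_mul_left ?_ h.w₁_pos
  have hy := mul_nonneg (sub_nonneg.2 h.mul_x₀_le_y) (sub_nonneg.2 h.sub_one_mul_w₂_le)
  have hx₀ := mul_nonneg (mul_nonneg h.x₀_nonneg (sub_nonneg.2 h.one_lt.le))
    (sub_nonneg.2 h.mul_w₂_le)
  linear_combination (s - 1) * h.sum_eq + hy + hx₀

lemma mul_add_mul_pos (h : ChordData s w₀ w₁ w₂ x₀ x₁ y α β) : 0 < s * x₀ + α * x₁ := by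
  have hs := h.one_lt
  have hx₁_lt : x₁ < s * y := by
    nlinarith [h.sub_one_mul_x₁_le, h.x₀_nonneg, h.x₁_pos, add_one_lt_sq_of_phiR_lt h.phiR_lt]
  refine pos_of_mul_pos_right (lt_of_lt_of_le (mul_pos h.w₂_pos (sub_pos.2 hx₁_lt)) ?_) h.w₀_pos.le
  have hα := mul_le_mul_of_nonneg_left h.sub_le_α h.x₁_nonneg
  linear_combination hα - s * h.sum_eq

lemma two_mul_le_cFun_mul (h : ChordData s w₀ w₁ w₂ x₀ x₁ y α β) :
    2 * (w₁ * (s * x₀ + x₁)) ≤ cFun s * ((1 + x₀) * (s * (w₁ + w₂) - w₀)) := by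
  have hs := h.one_lt
  have hx₀ := h.x₀_nonneg
  have hc := cFun_pos h.phiR_lt h.le_two
  have hpos : 0 < s * y - x₀ := by nlinarith [h.mul_x₀_le_y, h.y_pos]
  have hweights : (s ^ 2 - 1) * (w₁ * (x₁ + y)) ≤ (s * (w₁ + w₂) - w₀) * (s * y - x₀) := by
    linear_combination mul_nonneg (sub_nonneg.2 h.mul_w₀_le) (sub_nonneg.2 h.mul_x₀_le_y)
      + (s ^ 2 - 1) * h.sum_eq
  have hextremal := two_mul_le_cFun_mul_of_le_one h.phiR_lt h.le_two hx₀ h.x₁_nonneg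
    h.x₁_le_one h.y_pos h.y_le_one h.mul_x₀_le_y h.sub_one_mul_x₁_le
  refine le_of_mul_le_mul_right ?_ hpos
  calc 2 * (w₁ * (s * x₀ + x₁)) * (s * y - x₀)
      = w₁ * (2 * ((s * y - x₀) * (s * x₀ + x₁))) := by ring
    _ ≤ w₁ * (cFun s * ((s ^ 2 - 1) * (1 + x₀) * (x₁ + y))) :=
      mul_le_mul_of_nonneg_left hextremal h.w₁_pos.le
    _ = cFun s * (1 + x₀) * ((s ^ 2 - 1) * (w₁ * (x₁ + y))) := by ring
    _ ≤ cFun s * (1 + x₀) * ((s * (w₁ + w₂) - w₀) * (s * y - x₀)) := by gcongr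
    _ = cFun s * ((1 + x₀) * (s * (w₁ + w₂) - w₀)) * (s * y - x₀) := by ring

lemma two_mul_w₁_mul_x₁_le (h : ChordData s w₀ w₁ w₂ x₀ x₁ y α β) :
    2 * (w₁ * x₁) ≤ cFun s * (s * (w₁ + w₂) - w₀) := by
  have hx₀ := h.x₀_nonneg
  refine le_of_mul_le_mul_left ?_ (by linarith : 0 < 1 + x₀)
  have hx : 0 ≤ w₁ * (x₀ * (s - x₁)) :=
    mul_nonneg h.w₁_pos.le (mul_nonneg hx₀ (by linarith [h.x₁_le_one, h.one_lt]))
  linear_combination h.two_mul_le_cFun_mul + 2 * hx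

lemma two_mul_w₁_mul_add_le (h : ChordData s w₀ w₁ w₂ x₀ x₁ y α β) :
    2 * (w₁ * (s * x₀ + α * x₁)) ≤ cFun s * (s * (w₂ * α + w₁ * β) - w₀ * α * β
      - w₂ * (β * y - s * x₀) + w₁ * (s * x₀ + α * x₁)) := by
  have hc := cFun_pos h.phiR_lt h.le_two
  have hα := h.mul_add_mul_pos
  have hβ : 0 ≤ w₂ * (β * y - s * x₀) := mul_nonneg h.w₂_pos.le (sub_nonneg.2 h.mul_x₀_le)
  rcases le_total (w₀ * α - w₁ * s + w₂ * y) 0 with hneg | hpos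
  · refine two_mul_le_cFun_mul_of_mul_le h.phiR_lt h.le_two (mul_nonneg h.w₁_pos.le hα.le) ?_
    refine le_of_mul_le_mul_left ?_ (mul_pos h.w₂_pos h.y_pos)
    have hy : 0 ≤ s * w₂ * (w₁ * (s * x₀ + α * x₁)) * (1 - y) := by
      have := h.pos; have := h.w₁_pos; have := h.w₂_pos; have := sub_nonneg.2 h.y_le_one
      positivity
    linear_combination mul_nonneg hβ (neg_nonneg.2 hneg) + hy + s * α * w₂ * h.sum_eq
  · -- The right-hand side is decreasing in `β`, and for `β = 1` it suffices to treat `α = 1`.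
    have hsum_pos : 0 < s * x₀ + x₁ :=
      add_pos_of_nonneg_of_pos (mul_nonneg h.pos.le h.x₀_nonneg) h.x₁_pos
    have hβ_one := mul_nonneg hsum_pos.le (mul_nonneg hpos (sub_nonneg.2 h.β_le_one))
    have hα_one := mul_nonneg (mul_nonneg (sub_nonneg.2 h.α_le_one)
      (by linarith [h.x₁_le_one, h.one_lt] : 0 ≤ s - x₁))
      (mul_nonneg h.w₂_pos.le (sub_nonneg.2 h.mul_x₀_le_y))
    have hupper : (s * x₀ + α * x₁) * ((1 + x₀) * (s * (w₁ + w₂) - w₀)) ≤ (s * x₀ + x₁) *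
        (s * (w₂ * α + w₁ * β) - w₀ * α * β - w₂ * (β * y - s * x₀) +
          w₁ * (s * x₀ + α * x₁)) := by
      linear_combination hα_one + hβ_one + (s * α - s - s * x₀ - α * x₁) * h.sum_eq
    refine le_of_mul_le_mul_left ?_ hsum_pos
    linear_combination mul_le_mul_of_nonneg_left h.two_mul_le_cFun_mul hα.le
      + mul_le_mul_of_nonneg_left hupper hc.le

lemma two_mul_w₂_mul_sub_le (h : ChordData s w₀ w₁ w₂ x₀ x₁ y α β)
    (hle : w₁ * (s * x₀ + α * x₁) ≤ w₂ * (β * y - s * x₀)) :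
    2 * (w₂ * (β * y - s * x₀)) ≤ cFun s * (s * (w₂ * α + w₁ * β) - w₀ * α * β
      - w₁ * (s * x₀ + α * x₁) + w₂ * (β * y - s * x₀)) := by
  have hc := cFun_pos h.phiR_lt h.le_two
  have hα := mul_pos h.w₁_pos h.mul_add_mul_pos
  have hpos := mul_pos h.w₁_pos h.x₁_pos
  rcases le_total (w₀ * β - w₂ * s + w₁ * x₁) 0 with hneg | hnonneg
  · refine two_mul_le_cFun_mul_of_mul_le h.phiR_lt h.le_two (hα.le.trans hle) ?_
    refine le_of_mul_le_mul_left ?_ hpos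
    have hx₁ : 0 ≤ s * w₁ * (w₂ * (β * y - s * x₀)) * (1 - x₁) :=
      mul_nonneg (mul_nonneg (mul_pos h.pos h.w₁_pos).le (hα.le.trans hle))
        (sub_nonneg.2 h.x₁_le_one)
    linear_combination mul_nonneg hα.le (neg_nonneg.2 hneg) + hx₁ - s * β * w₁ * h.sum_eq
  · have hlower : w₂ * (β * y - s * x₀) * (s * (w₁ + w₂) - w₀) ≤ w₁ * x₁ *
        (s * (w₂ * α + w₁ * β) - w₀ * α * β - w₁ * (s * x₀ + α * x₁) + w₂ * (β * y - s * x₀)) := by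
      have hβ_one := mul_nonneg (mul_pos h.w₀_pos (hα.trans_le hle)).le (sub_nonneg.2 h.β_le_one)
      linear_combination mul_nonneg (sub_nonneg.2 hle) hnonneg + hβ_one - s * β * w₁ * h.sum_eq
    refine le_of_mul_le_mul_left ?_ hpos
    linear_combination mul_le_mul_of_nonneg_left h.two_mul_w₁_mul_x₁_le (hα.le.trans hle)
      + mul_le_mul_of_nonneg_left hlower hc.le

end ChordData

/-! ### Contact frames -/

lemma neg_mem_sub_self {E : Type*} [AddCommGroup E] {K : Set E} {x : E} (hx : x ∈ K - K) :
    -x ∈ K - K := by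
  rwa [← neg_sub K K, Set.neg_mem_neg]

section DifferenceBody

variable {E : Type*} [AddCommGroup E] [Module ℝ E] {K : Set E}

lemma smul_mem_sub_of_le (hK : Convex ℝ K) {x : E} {r R : ℝ} (hr : 0 < r) (hrR : r ≤ R)
    (hx : R • x ∈ K - K) : r • x ∈ K - K := by
  have hR : 0 < R := hr.trans_le hrR
  obtain ⟨k, hk, -⟩ := Set.mem_sub.1 hx
  have hzero : (0 : E) ∈ K - K := ⟨k, hk, k, hk, sub_self k⟩
  have := (hK.sub hK).smul_mem_of_zero_mem hzero hx ⟨by positivity, (div_le_one hR).2 hrR⟩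
  rwa [smul_smul, div_mul_cancel₀ r hR.ne'] at this

/-- The chord parallel to `x` joins `q` to a point of the segment `[p, x]`. -/
lemma div_smul_mem_sub (hK : Convex ℝ K) {p q x : E} (hp : p ∈ K) (hq : q ∈ K) (hx : x ∈ K)
    {a b d : ℝ} (ha : 0 < a) (hb : 0 ≤ b) (hba : b ≤ a) (h : b • p - a • q = d • x) :
    ((d - b + a) / a) • x ∈ K - K := by
  refine ⟨(b / a) • p + (1 - b / a) • x, hK hp hx (by positivity)
    (sub_nonneg.2 ((div_le_one ha).2 hba)) (by ring), q, hq, ?_⟩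
  refine smul_right_injective E ha.ne' ?_
  simp only [smul_sub, smul_add, smul_smul]
  rw [show a * (b / a) = b by field_simp, show a * (1 - b / a) = a - b by field_simp,
    show a * ((d - b + a) / a) = d - b + a by field_simp, add_sub_right_comm, h, ← add_smul]
  congr 1
  ring

end DifferenceBody

/-- A contact frame of `K` with ratio `s`: points `p i ∈ K` at which the functional `u i`,
normalised so that `u i ≥ -1` on `K`, attains the value `s` (its maximum on `K` when
`K ⊆ s • -K`), together with a positive relation between the `u i`, which have no common zero. -/
structure IsContactFrame {ι E : Type*} [Fintype ι] [AddCommGroup E] [Module ℝ E] (K : Set E)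
    (s : ℝ) (w : ι → ℝ) (u : ι → Module.Dual ℝ E) (p : ι → E) : Prop where
  weight_pos : ∀ i, 0 < w i
  mem : ∀ i, p i ∈ K
  sum_smul_eq_zero : ∑ i, w i • u i = 0
  neg_one_le : ∀ i, ∀ k ∈ K, -1 ≤ u i k
  apply_self : ∀ i, u i (p i) = s
  eq_zero_of_forall : ∀ z, (∀ i, u i z = 0) → z = 0

namespace IsContactFrame

section General

variable {ι E : Type*} [Fintype ι] [AddCommGroup E] [Module ℝ E] {K : Set E} {s : ℝ}
  {w : ι → ℝ} {u : ι → Module.Dual ℝ E} {p : ι → E}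

lemma comp_perm (h : IsContactFrame K s w u p) (σ : Equiv.Perm ι) :
    IsContactFrame K s (w ∘ σ) (u ∘ σ) (p ∘ σ) where
  weight_pos i := h.weight_pos (σ i)
  mem i := h.mem (σ i)
  sum_smul_eq_zero := (Equiv.sum_comp σ fun i ↦ w i • u i).trans h.sum_smul_eq_zero
  neg_one_le i := h.neg_one_le (σ i)
  apply_self i := h.apply_self (σ i)
  eq_zero_of_forall z hz := h.eq_zero_of_forall z fun i ↦ by simpa using hz (σ.symm i)

lemma sum_mul_apply (h : IsContactFrame K s w u p) (z : E) : ∑ i, w i * u i z = 0 := by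
  simpa using congr($h.sum_smul_eq_zero z)

lemma add_one_mul_le (h : IsContactFrame K s w u p) (i : ι) : (s + 1) * w i ≤ ∑ j, w j :=
  calc (s + 1) * w i = w i * (u i (p i) + 1) := by rw [h.apply_self, mul_comm]
    _ ≤ ∑ j, w j * (u j (p i) + 1) :=
      Finset.single_le_sum (f := fun j ↦ w j * (u j (p i) + 1)) (fun j _ ↦ mul_nonneg
        (h.weight_pos j).le (by linarith [h.neg_one_le j _ (h.mem i)])) (Finset.mem_univ i)
    _ = ∑ j, w j := by simp [mul_add, Finset.sum_add_distrib, h.sum_mul_apply]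

lemma apply_le_one (h : IsContactFrame K s w u p) (i : ι) {x : E} (hx : -x ∈ K) : u i x ≤ 1 := by
  simpa using h.neg_one_le i _ hx

end General

variable {E : Type*} [AddCommGroup E] [Module ℝ E] {K : Set E} {s : ℝ}
  {w : Fin 3 → ℝ} {u : Fin 3 → Module.Dual ℝ E} {p : Fin 3 → E} {x : E}

lemma sum_three_mul_apply (h : IsContactFrame K s w u p) (z : E) :
    w 0 * u 0 z + w 1 * u 1 z + w 2 * u 2 z = 0 := by
  rw [← Fin.sum_univ_three fun i ↦ w i * u i z, h.sum_mul_apply]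

lemma le_two (h : IsContactFrame K s w u p) : s ≤ 2 := by
  have hle (i : Fin 3) := h.add_one_mul_le i
  have hpos (i : Fin 3) := h.weight_pos i
  simp only [Fin.sum_univ_three] at hle
  nlinarith [hle 0, hle 1, hle 2, hpos 0, hpos 1, hpos 2]

/-- Cramer's rule for `p 1`, `p 2` and `x`, which are linearly dependent because the kernel of the
frame is trivial and its functionals satisfy a relation. -/
lemma smul_sub_smul (h : IsContactFrame K s w u p) (x : E) :
    (w 2 * (u 0 (p 2) * u 2 x - s * u 0 x)) • p 1 - (w 1 * (s * u 0 x - u 0 (p 1) * u 1 x)) • p 2 =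
      (-(s * (w 2 * u 0 (p 1) + w 1 * u 0 (p 2))) - w 0 * u 0 (p 1) * u 0 (p 2)) • x := by
  have hx := h.sum_three_mul_apply x
  have h₁ := h.sum_three_mul_apply (p 1)
  have h₂ := h.sum_three_mul_apply (p 2)
  rw [h.apply_self] at h₁ h₂
  refine sub_eq_zero.1 (h.eq_zero_of_forall _ fun i ↦ ?_)
  simp only [map_sub, map_smul, smul_eq_mul]
  fin_cases i
  · simp only [Fin.zero_eta]
    linear_combination u 0 (p 1) * u 0 (p 2) * hx
  · simp only [Fin.mk_one, h.apply_self]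
    linear_combination s * u 0 (p 2) * hx - (s * u 0 x - u 0 (p 1) * u 1 x) * h₂
  · simp only [Fin.reduceFinMk, h.apply_self]
    linear_combination s * u 0 (p 1) * hx + (u 0 (p 2) * u 2 x - s * u 0 x) * h₁

lemma chordData (h : IsContactFrame K s w u p) (hs : phiR < s) (hx : x ∈ K) (hnx : -x ∈ K)
    (h₀ : 0 ≤ u 0 x) (h₁ : 0 ≤ u 1 x) (h₂ : u 2 x < 0) (hle : s * u 0 x ≤ u 0 (p 2) * u 2 x) :
    ChordData s (w 0) (w 1) (w 2) (u 0 x) (u 1 x) (-u 2 x) (-u 0 (p 1)) (-u 0 (p 2)) := by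
  have hsum (i : Fin 3) := h.add_one_mul_le i
  simp only [Fin.sum_univ_three] at hsum
  have hp₁ := h.sum_three_mul_apply (p 1)
  rw [h.apply_self] at hp₁
  exact
  { phiR_lt := hs
    w₀_pos := h.weight_pos 0
    w₁_pos := h.weight_pos 1
    w₂_pos := h.weight_pos 2
    mul_w₀_le := by linarith [hsum 0]
    mul_w₁_le := by linarith [hsum 1]
    mul_w₂_le := by linarith [hsum 2]
    x₀_nonneg := h₀
    x₁_nonneg := h₁
    x₁_le_one := h.apply_le_one 1 hnx
    y_pos := neg_pos.2 h₂
    y_le_one := neg_le.1 (h.neg_one_le 2 x hx)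
    sum_eq := by linarith [h.sum_three_mul_apply x]
    α_le_one := neg_le.1 (h.neg_one_le 0 _ (h.mem 1))
    β_le_one := neg_le.1 (h.neg_one_le 0 _ (h.mem 2))
    sub_le_α := by nlinarith [h.weight_pos 2, h.neg_one_le 2 _ (h.mem 1)]
    mul_x₀_le := by linarith }

lemma smul_mem_sub_of_mul_le (h : IsContactFrame K s w u p) (hK : Convex ℝ K) (hs : phiR < s)
    (hx : x ∈ K) (hnx : -x ∈ K) (h₀ : 0 ≤ u 0 x) (h₁ : 0 ≤ u 1 x) (h₂ : u 2 x < 0)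
    (hle : s * u 0 x ≤ u 0 (p 2) * u 2 x) : (2 / cFun s) • x ∈ K - K := by
  have hc := cFun_pos hs h.le_two
  have data := h.chordData hs hx hnx h₀ h₁ h₂ hle
  have hcramer := h.smul_sub_smul x
  set A := w 1 * (s * u 0 x - u 0 (p 1) * u 1 x)
  set B := w 2 * (u 0 (p 2) * u 2 x - s * u 0 x)
  set D := -(s * (w 2 * u 0 (p 1) + w 1 * u 0 (p 2))) - w 0 * u 0 (p 1) * u 0 (p 2)
  have hA_pos : 0 < A := by
    linear_combination mul_pos data.w₁_pos data.mul_add_mul_pos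
  have hB_nonneg : 0 ≤ B := mul_nonneg data.w₂_pos.le (sub_nonneg.2 hle)
  rcases le_total B A with hBA | hAB
  · refine smul_mem_sub_of_le hK (by positivity) ?_
      (div_smul_mem_sub hK (h.mem 1) (h.mem 2) hx hA_pos hB_nonneg hBA hcramer)
    rw [div_le_div_iff₀ hc hA_pos]
    linear_combination data.two_mul_w₁_mul_add_le
  · have hB_pos : 0 < B := hA_pos.trans_le hAB
    have hcramer_neg : A • p 2 - B • p 1 = D • -x := by rw [smul_neg, ← hcramer, neg_sub]
    have hmem : (2 / cFun s) • -x ∈ K - K := by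
      refine smul_mem_sub_of_le hK (by positivity) ?_
        (div_smul_mem_sub hK (h.mem 2) (h.mem 1) hnx hB_pos hA_pos.le hAB hcramer_neg)
      rw [div_le_div_iff₀ hc hB_pos]
      linear_combination data.two_mul_w₂_mul_sub_le (by linear_combination hAB)
    simpa using neg_mem_sub_self hmem

lemma apply_two_neg (h : IsContactFrame K s w u p) (hx : x ≠ 0) (h₀ : 0 ≤ u 0 x)
    (h₁ : 0 ≤ u 1 x) : u 2 x < 0 := by
  by_contra! h₂
  refine hx (h.eq_zero_of_forall x fun i ↦ ?_)
  have hnonneg : ∀ j ∈ Finset.univ, 0 ≤ w j * u j x := fun j _ ↦ mul_nonneg (h.weight_pos j).le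
    (by fin_cases j <;> assumption)
  have hzero : w i * u i x = 0 :=
    (Finset.sum_eq_zero_iff_of_nonneg hnonneg).1 (h.sum_mul_apply x) i (Finset.mem_univ i)
  exact (mul_eq_zero.1 hzero).resolve_left (h.weight_pos i).ne'

lemma smul_mem_sub_of_nonneg (h : IsContactFrame K s w u p) (hK : Convex ℝ K) (hs : phiR < s)
    (hx : x ∈ K) (hnx : -x ∈ K) (hne : x ≠ 0) (h₀ : 0 ≤ u 0 x) (h₁ : 0 ≤ u 1 x) :
    (2 / cFun s) • x ∈ K - K := by
  have h₂ := h.apply_two_neg hne h₀ h₁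
  by_cases hle : s * u 0 x ≤ u 0 (p 2) * u 2 x
  · exact h.smul_mem_sub_of_mul_le hK hs hx hnx h₀ h₁ h₂ hle
  -- If the line `ℝ x` separates `p 2` from `p 1`, then it does not separate `p 2` from `p 0`.
  have hswap : s * u 1 x ≤ u 1 (p 2) * u 2 x := by
    have hp₂ := h.sum_three_mul_apply (p 2)
    rw [h.apply_self] at hp₂
    refine le_of_mul_le_mul_left ?_ (h.weight_pos 1)
    linear_combination mul_le_mul_of_nonneg_left (not_le.1 hle).le (h.weight_pos 0).le
      + s * h.sum_three_mul_apply x - u 2 x * hp₂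
  exact (h.comp_perm (Equiv.swap 0 1)).smul_mem_sub_of_mul_le hK hs hx hnx h₁ h₀ h₂ hswap

end IsContactFrame

lemma exists_perm_same_sign (f : Fin 3 → ℝ) :
    ∃ σ : Equiv.Perm (Fin 3), 0 ≤ f (σ 0) ∧ 0 ≤ f (σ 1) ∨ f (σ 0) ≤ 0 ∧ f (σ 1) ≤ 0 := by
  have hpair : (0 ≤ f 0 ∧ 0 ≤ f 1 ∨ f 0 ≤ 0 ∧ f 1 ≤ 0) ∨
      (0 ≤ f 0 ∧ 0 ≤ f 2 ∨ f 0 ≤ 0 ∧ f 2 ≤ 0) ∨ (0 ≤ f 2 ∧ 0 ≤ f 1 ∨ f 2 ≤ 0 ∧ f 1 ≤ 0) := by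
    grind
  rcases hpair with h₀₁ | h₀₂ | h₂₁
  exacts [⟨1, h₀₁⟩, ⟨Equiv.swap 1 2, h₀₂⟩, ⟨Equiv.swap 0 2, h₂₁⟩]

lemma IsContactFrame.smul_mem_sub {E : Type*} [AddCommGroup E] [Module ℝ E] {K : Set E} {s : ℝ}
    {w : Fin 3 → ℝ} {u : Fin 3 → Module.Dual ℝ E} {p : Fin 3 → E} {x : E}
    (h : IsContactFrame K s w u p) (hK : Convex ℝ K) (hs : phiR < s)
    (hx : x ∈ K) (hnx : -x ∈ K) : (2 / cFun s) • x ∈ K - K := by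
  rcases eq_or_ne x 0 with rfl | hne
  · exact ⟨0, hx, 0, hx, by simp⟩
  obtain ⟨σ, ⟨h₀, h₁⟩ | ⟨h₀, h₁⟩⟩ := exists_perm_same_sign fun i ↦ u i x
  · exact (h.comp_perm σ).smul_mem_sub_of_nonneg hK hs hx hnx hne h₀ h₁
  · have hmem : (2 / cFun s) • -x ∈ K - K := (h.comp_perm σ).smul_mem_sub_of_nonneg hK hs hnx
      (by rwa [neg_neg]) (neg_ne_zero.2 hne) (by simpa using h₀) (by simpa using h₁)
    simpa using neg_mem_sub_self hmem

/-! ### Existence of contact frames -/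

/-- A version of the Dubovitskii–Milyutin separation theorem. -/
lemma exists_sum_eq_zero_and_sum_pos {ι E : Type*} [Fintype ι] [AddCommGroup E] [Module ℝ E]
    [TopologicalSpace E] [IsTopologicalAddGroup E] [ContinuousSMul ℝ E] {U : ι → Set E}
    (hopen : ∀ i, IsOpen (U i)) (hconv : ∀ i, Convex ℝ (U i)) (hU : ⋂ i, U i = ∅) :
    ∃ b : ι → Module.Dual ℝ E, ∑ i, b i = 0 ∧ (∀ i, Continuous (b i)) ∧
      ∀ y : ι → E, (∀ i, y i ∈ U i) → 0 < ∑ i, b i (y i) := by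
  classical
  let diag : E →ₗ[ℝ] ι → E := LinearMap.pi fun _ ↦ LinearMap.id
  have hdisj : Disjoint (univ.pi U) (LinearMap.range diag : Set (ι → E)) := by
    rw [Set.disjoint_left]
    rintro _ hmem ⟨t, rfl⟩
    exact hU.subset (mem_iInter.2 fun i ↦ hmem i trivial)
  obtain ⟨f, a, hfU, hfdiag⟩ := geometric_hahn_banach_open (convex_pi fun i _ ↦ hconv i)
    (isOpen_set_pi finite_univ fun i _ ↦ hopen i) (LinearMap.range diag).convex hdisj
  have ha : a ≤ 0 := by simpa using hfdiag 0 (zero_mem _)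
  -- A linear functional bounded below on a subspace vanishes there.
  have hdiag (t : E) : f (diag t) = 0 := by
    by_contra hne
    have := hfdiag (diag (((a - 1) / f (diag t)) • t)) ⟨_, rfl⟩
    rw [map_smul, map_smul, smul_eq_mul, div_mul_cancel₀ _ hne] at this
    linarith
  have hsum (y : ι → E) : ∑ i, f (Pi.single i (y i)) = f y := by
    rw [← map_sum, Finset.univ_sum_single]
  refine ⟨fun i ↦ -(f.toLinearMap ∘ₗ LinearMap.single ℝ (fun _ ↦ E) i), ?_, fun i ↦ ?_,
    fun y hy ↦ ?_⟩
  · ext t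
    simpa [diag] using (hsum (diag t)).trans (hdiag t)
  · exact (f.continuous.comp (continuous_single i)).neg
  · have := hfU y fun i _ ↦ hy i
    simp only [LinearMap.neg_apply, Finset.sum_neg_distrib, LinearMap.comp_apply,
      LinearMap.single_apply, ContinuousLinearMap.coe_coe, hsum]
    linarith

/-- `p ∈ K` is a contact point of `K` and `-s • K`, with `b` as a common outer normal:
on `-s • K` the functional `b` is at most `b p`. -/
def IsContact {E : Type*} [AddCommGroup E] [Module ℝ E] (K : Set E) (s : ℝ)
    (b : Module.Dual ℝ E) (p : E) : Prop :=
  p ∈ K ∧ ∀ k ∈ K, 0 ≤ b (p + s • k)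

lemma exists_eq_smul_of_apply_eq_zero {𝕜 E : Type*} [Field 𝕜] [AddCommGroup E] [Module 𝕜 E]
    (hE : Module.finrank 𝕜 E = 2) {z : E} (hz : z ≠ 0) {b β : Module.Dual 𝕜 E} (hβ : β ≠ 0)
    (hβz : β z = 0) (hbz : b z = 0) : ∃ c : 𝕜, b = c • β := by
  have : FiniteDimensional 𝕜 E := .of_finrank_pos (by lia)
  have hker : Module.finrank 𝕜 (LinearMap.ker β) = 1 := by
    have := Module.Dual.finrank_ker_add_one_of_ne_zero hβ
    lia
  have hle : LinearMap.ker β ≤ LinearMap.ker b := fun x hx ↦ by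
    obtain ⟨a, ha⟩ := (finrank_eq_one_iff_of_nonzero' (⟨z, hβz⟩ : LinearMap.ker β)
      fun h ↦ hz congr(($h).1)).1 hker ⟨x, hx⟩
    obtain rfl : a • z = x := congr(($ha).1)
    simp [hbz]
  have hspan := mem_span_of_iInf_ker_le_ker (ι := Unit) (L := fun _ ↦ β) (by simpa using hle)
  rw [Set.range_const] at hspan
  obtain ⟨c, rfl⟩ := Submodule.mem_span_singleton.1 hspan
  exact ⟨c, rfl⟩

section Existence

variable {ι E : Type*} [NormedAddCommGroup E] [NormedSpace ℝ E] {K : Set E} {s : ℝ}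

lemma exists_family_forall_exists_sub_notMem_smul [Fintype ι] [FiniteDimensional ℝ E]
    (hcard : Module.finrank ℝ E + 1 ≤ Fintype.card ι) (hconv : Convex ℝ K) (hcomp : IsCompact K)
    (hne : K.Nonempty) {ρ : ℝ} (hρ : ∀ t, ∃ x ∈ K, t - x ∉ ρ • K) :
    ∃ x : ι → E, (∀ i, x i ∈ K) ∧ ∀ t, ∃ i, t - x i ∉ ρ • K := by
  have hempty : ¬(⋂ x : K, (x : E) +ᵥ ρ • K).Nonempty := by
    rintro ⟨t, ht⟩
    obtain ⟨x, hx, hxt⟩ := hρ t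
    refine hxt ?_
    simpa [mem_vadd_set_iff_neg_vadd_mem, neg_add_eq_sub] using mem_iInter.1 ht ⟨x, hx⟩
  obtain ⟨I, hI, hI_empty⟩ : ∃ I : Finset K, I.card ≤ Module.finrank ℝ E + 1 ∧
      ¬(⋂ x ∈ I, (x : E) +ᵥ ρ • K).Nonempty := by
    by_contra! hall
    exact hempty (Convex.helly_theorem_compact' (𝕜 := ℝ) (fun x ↦ (hconv.smul ρ).vadd _)
      (fun x ↦ (hcomp.smul ρ).vadd _) hall)
  obtain ⟨e⟩ := Function.Embedding.nonempty_of_card_le (α := I) (β := ι)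
    (by simpa using hI.trans hcard)
  obtain ⟨k, hk⟩ := hne
  let x : ι → K := Function.extend e Subtype.val fun _ ↦ ⟨k, hk⟩
  refine ⟨fun i ↦ x i, fun i ↦ (x i).2, fun t ↦ ?_⟩
  by_contra! hall
  refine hI_empty ⟨t, mem_iInter₂.2 fun y hy ↦ ?_⟩
  have := hall (e ⟨y, hy⟩)
  rw [show x (e ⟨y, hy⟩) = y from e.injective.extend_apply ..] at this
  simpa [mem_vadd_set_iff_neg_vadd_mem, neg_add_eq_sub] using this

lemma exists_family_forall_exists_sub_notMem_smul_interior [Finite ι] (hs : 0 < s)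
    (hcomp : IsCompact K)
    (h : ∀ ρ ∈ Ioo 0 s, ∃ x : ι → E, (∀ i, x i ∈ K) ∧ ∀ t, ∃ i, t - x i ∉ ρ • K) :
    ∃ x : ι → E, (∀ i, x i ∈ K) ∧ ∀ t, ∃ i, t - x i ∉ s • interior K := by
  obtain ⟨ρ, -, hρ_mem, hρ⟩ := exists_seq_strictMono_tendsto' hs
  choose y hyK hy using fun n ↦ h (ρ n) (hρ_mem n)
  obtain ⟨x, hxK, φ, hφ, hlim⟩ := (isCompact_univ_pi fun _ : ι ↦ hcomp).tendsto_subseq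
    (x := y) fun n i _ ↦ hyK n i
  refine ⟨x, fun i ↦ hxK i trivial, fun t ↦ ?_⟩
  by_contra! hall
  have hevent : ∀ᶠ n in Filter.atTop, ∀ i, (ρ (φ n))⁻¹ • (t - y (φ n) i) ∈ interior K := by
    refine Filter.eventually_all.2 fun i ↦ ?_
    have htendsto := ((hρ.comp hφ.tendsto_atTop).inv₀ hs.ne').smul
      (tendsto_const_nhds.sub (tendsto_pi_nhds.1 hlim i) (a := t))
    exact htendsto.eventually_mem
      (isOpen_interior.mem_nhds ((mem_smul_set_iff_inv_smul_mem₀ hs.ne' _ _).1 (hall i)))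
  obtain ⟨n, hn⟩ := hevent.exists
  obtain ⟨i, hi⟩ := hy (φ n) t
  exact hi ((mem_smul_set_iff_inv_smul_mem₀ (hρ_mem _).1.ne' _ _).2 (interior_subset (hn i)))

lemma exists_isContact_of_family [Fintype ι] (hconv : Convex ℝ K) (hint : (interior K).Nonempty)
    (hcent : K ⊆ s • -K) (hs : 0 < s) {x : ι → E} (hxK : ∀ i, x i ∈ K)
    (hx : ∀ t, ∃ i, t - x i ∉ s • interior K) :
    ∃ b : ι → Module.Dual ℝ E, ∑ i, b i = 0 ∧ b ≠ 0 ∧ ∀ i, IsContact K s (b i) (x i) := by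
  classical
  obtain ⟨b, hsum, hb_cont, hb⟩ := exists_sum_eq_zero_and_sum_pos
    (U := fun i ↦ x i +ᵥ s • interior K) (fun i ↦ (isOpen_interior.smul₀ hs.ne').vadd _)
    (fun i ↦ (hconv.interior.smul s).vadd _) (by
      refine eq_empty_of_forall_notMem fun t ht ↦ ?_
      obtain ⟨i, hi⟩ := hx t
      refine hi ?_
      simpa [mem_vadd_set_iff_neg_vadd_mem, neg_add_eq_sub] using mem_iInter.1 ht i)
  have hb_pos (k : ι → E) (hk : ∀ i, k i ∈ interior K) : 0 < ∑ i, b i (x i + s • k i) :=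
    hb _ fun i ↦ vadd_mem_vadd_set (smul_mem_smul_set (hk i))
  have hb_nonneg (k : ι → E) (hk : ∀ i, k i ∈ K) : 0 ≤ ∑ i, b i (x i + s • k i) := by
    have hclosed : IsClosed {k : ι → E | 0 ≤ ∑ i, b i (x i + s • k i)} :=
      isClosed_le continuous_const (by fun_prop)
    have hmem : k ∈ closure (univ.pi fun _ ↦ interior K) := by
      rw [closure_pi_set, hconv.closure_interior_eq_closure_of_nonempty_interior hint]
      exact fun i _ ↦ subset_closure (hk i)
    have hsub : univ.pi (fun _ ↦ interior K) ⊆ {k : ι → E | 0 ≤ ∑ i, b i (x i + s • k i)} :=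
      fun k hk ↦ (hb_pos k fun i ↦ hk i trivial).le
    exact closure_minimal hsub hclosed hmem
  refine ⟨b, hsum, ?_, fun i ↦ ⟨hxK i, fun k hk ↦ ?_⟩⟩
  · rintro rfl
    obtain ⟨k, hk⟩ := hint
    simpa using hb_pos (fun _ ↦ k) fun _ ↦ hk
  · -- Choosing `-s • k j = x j` for `j ≠ i` isolates the `i`-th summand.
    have hopp (j : ι) : ∃ k ∈ K, x j + s • k = 0 := by
      obtain ⟨k, hk, hkx⟩ := hcent (hxK j)
      exact ⟨-k, hk, by simp [← hkx]⟩
    choose q hqK hq using hopp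
    have := hb_nonneg (Function.update q i k) fun j ↦ by
      rcases eq_or_ne j i with rfl | hj <;> simp [*]
    rwa [Finset.sum_eq_single_of_mem i (Finset.mem_univ i), Function.update_self] at this
    intro j _ hj
    rw [Function.update_of_ne hj, hq, map_zero]

lemma exists_isContact [Fintype ι] [FiniteDimensional ℝ E]
    (hcard : Module.finrank ℝ E + 1 ≤ Fintype.card ι) (hconv : Convex ℝ K) (hcomp : IsCompact K)
    (hint : (interior K).Nonempty) (hcent : K ⊆ s • -K) (hs : 0 < s)
    (hopt : ∀ ρ ∈ Ioo 0 s, ∀ t, ∃ x ∈ K, t - x ∉ ρ • K) :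
    ∃ (b : ι → Module.Dual ℝ E) (p : ι → E),
      ∑ i, b i = 0 ∧ b ≠ 0 ∧ ∀ i, IsContact K s (b i) (p i) := by
  obtain ⟨p, hpK, hp⟩ := exists_family_forall_exists_sub_notMem_smul_interior hs hcomp fun ρ hρ ↦
    exists_family_forall_exists_sub_notMem_smul hcard hconv hcomp (hint.mono interior_subset)
      (hopt ρ hρ)
  obtain ⟨b, hb⟩ := exists_isContact_of_family hconv hint hcent hs hpK hp
  exact ⟨b, p, hb⟩

lemma dual_eq_zero_of_forall_mem (hint : (interior K).Nonempty) {b : Module.Dual ℝ E}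
    (hb : ∀ k ∈ K, b k = 0) : b = 0 := by
  have hker : LinearMap.ker b = ⊤ :=
    Submodule.eq_top_of_nonempty_interior' _ (hint.mono (interior_mono hb))
  exact LinearMap.ker_eq_top.1 hker

namespace IsContact

lemma apply_pos {b : Module.Dual ℝ E} {p : E} (h : IsContact K s b p)
    (hint : (interior K).Nonempty) (hcent : K ⊆ s • -K) (hs : 0 < s) (hb : b ≠ 0) : 0 < b p := by
  by_contra! hp
  have hnonneg : ∀ k ∈ K, 0 ≤ b k := fun k hk ↦ by
    have := h.2 k hk
    rw [map_add, map_smul, smul_eq_mul] at this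
    exact nonneg_of_mul_nonneg_right (by linarith) hs
  refine hb (dual_eq_zero_of_forall_mem hint fun k hk ↦ (hnonneg k hk).antisymm' ?_)
  obtain ⟨q, hq, rfl⟩ := hcent hk
  have := hnonneg _ hq
  rw [map_neg] at this
  simpa using mul_nonpos_of_nonneg_of_nonpos hs.le (neg_nonneg.1 this)

lemma eq_zero_of_neg_smul {b : Module.Dual ℝ E} {p q : E} {c : ℝ} (hp : IsContact K s b p)
    (hq : IsContact K s (-(c • b)) q) (hc : 0 < c) (hint : (interior K).Nonempty) (hs : 1 < s) :
    b = 0 := by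
  have hlower (k : E) (hk : k ∈ K) : -b p ≤ s * b k := by
    have := hp.2 k hk
    rw [map_add, map_smul, smul_eq_mul] at this
    linarith
  have hupper (k : E) (hk : k ∈ K) : s * b k ≤ -b q := by
    have := hq.2 k hk
    simp only [LinearMap.neg_apply, LinearMap.smul_apply, map_add, map_smul, smul_eq_mul] at this
    nlinarith
  have hbq := hlower q hq.1
  have hbp := hupper p hp.1
  have hs_sq : 0 < s ^ 2 - 1 := by nlinarith
  have hbp_nonpos : b p ≤ 0 := by nlinarith
  have hbq_nonneg : 0 ≤ b q := by nlinarith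
  refine dual_eq_zero_of_forall_mem hint fun k hk ↦ le_antisymm ?_ ?_
  · nlinarith [hupper k hk]
  · nlinarith [hlower k hk]

lemma eq_zero_of_sum_eq_zero_of_eq_smul [Fintype ι] {b : ι → Module.Dual ℝ E} {p : ι → E}
    (h : ∀ i, IsContact K s (b i) (p i)) (hint : (interior K).Nonempty) (hs : 1 < s)
    (hsum : ∑ i, b i = 0) {c : ι → ℝ} {β : Module.Dual ℝ E} (hb : ∀ i, b i = c i • β) :
    b = 0 := by
  rcases eq_or_ne β 0 with rfl | hβ
  · ext1 i
    simp [hb]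
  have hc_sum : ∑ i, c i = 0 := by
    simpa [hb, ← Finset.sum_smul, hβ] using hsum
  by_contra hne
  obtain ⟨k, hk⟩ : ∃ k, c k ≠ 0 := by
    by_contra! hc
    exact hne (funext fun i ↦ by simp [hb, hc])
  obtain ⟨i, -, hi⟩ := Finset.exists_pos_of_sum_zero_of_exists_nonzero c hc_sum
    ⟨k, Finset.mem_univ k, hk⟩
  obtain ⟨j, -, hj⟩ := Finset.exists_pos_of_sum_zero_of_exists_nonzero (fun i ↦ -c i)
    (by simpa using hc_sum) ⟨k, Finset.mem_univ k, neg_ne_zero.2 hk⟩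
  have hbj : b j = -((-c j / c i) • b i) := by
    rw [hb, hb, smul_smul, div_mul_cancel₀ _ hi.ne', neg_smul, neg_neg]
  have hbi : b i = 0 := (h i).eq_zero_of_neg_smul (hbj ▸ h j) (div_pos hj hi) hint hs
  exact smul_ne_zero hi.ne' hβ ((hb i).symm.trans hbi)

lemma ne_zero {b : Fin 3 → Module.Dual ℝ E} {p : Fin 3 → E}
    (h : ∀ i, IsContact K s (b i) (p i)) (hint : (interior K).Nonempty) (hs : 1 < s)
    (hsum : ∑ i, b i = 0) (hb : b ≠ 0) (i : Fin 3) : b i ≠ 0 := by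
  intro hi
  have hadd : b (i + 1) + b (i + 2) = 0 := by
    rw [← Equiv.sum_comp (Equiv.addLeft i), Fin.sum_univ_three] at hsum
    simpa [hi] using hsum
  have hneg : b (i + 1) = -((1 : ℝ) • b (i + 2)) := by
    rw [one_smul, eq_neg_of_add_eq_zero_left hadd]
  have hi₂ : b (i + 2) = 0 := (h (i + 2)).eq_zero_of_neg_smul (hneg ▸ h (i + 1)) one_pos hint hs
  have hi₁ : b (i + 1) = 0 := by rw [← hadd, hi₂, add_zero]
  refine hb (funext fun j ↦ ?_)
  fin_cases i <;> fin_cases j <;> assumption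

lemma eq_zero_of_forall_apply_eq_zero [Fintype ι] (hE : Module.finrank ℝ E = 2)
    {b : ι → Module.Dual ℝ E} {p : ι → E} (h : ∀ i, IsContact K s (b i) (p i))
    (hint : (interior K).Nonempty) (hs : 1 < s) (hsum : ∑ i, b i = 0) (hb : b ≠ 0) {z : E}
    (hz : ∀ i, b i z = 0) : z = 0 := by
  by_contra hne
  obtain ⟨k, hk⟩ := Function.ne_iff.1 hb
  choose c hc using fun i ↦ exists_eq_smul_of_apply_eq_zero hE hne hk (hz k) (hz i)
  exact hb (eq_zero_of_sum_eq_zero_of_eq_smul h hint hs hsum hc)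

lemma isContactFrame [Fintype ι] {b : ι → Module.Dual ℝ E} {p : ι → E}
    (h : ∀ i, IsContact K s (b i) (p i)) (hs : 0 < s) (hpos : ∀ i, 0 < b i (p i))
    (hsum : ∑ i, b i = 0) (hker : ∀ z, (∀ i, b i z = 0) → z = 0) :
    IsContactFrame K s (fun i ↦ b i (p i) / s) (fun i ↦ (s / b i (p i)) • b i) p where
  weight_pos i := div_pos (hpos i) hs
  mem i := (h i).1
  sum_smul_eq_zero := by
    rw [← hsum]
    refine Finset.sum_congr rfl fun i _ ↦ ?_
    rw [smul_smul, div_mul_div_cancel₀ hs.ne', div_self (hpos i).ne', one_smul]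
  neg_one_le i k hk := by
    have hmul := (h i).2 k hk
    rw [map_add, map_smul, smul_eq_mul] at hmul
    rw [LinearMap.smul_apply, smul_eq_mul, div_mul_eq_mul_div, le_div_iff₀ (hpos i)]
    linarith
  apply_self i := div_mul_cancel₀ s (hpos i).ne'
  eq_zero_of_forall z hz := hker z fun i ↦
    (smul_eq_zero.1 (hz i)).resolve_left (div_pos hs (hpos i)).ne'

end IsContact

lemma exists_isContactFrame (hE : Module.finrank ℝ E = 2) (hconv : Convex ℝ K)
    (hcomp : IsCompact K) (hint : (interior K).Nonempty) (hcent : K ⊆ s • -K) (hs : 1 < s)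
    (hopt : ∀ ρ ∈ Ioo 0 s, ∀ t, ∃ x ∈ K, t - x ∉ ρ • K) :
    ∃ (w : Fin 3 → ℝ) (u : Fin 3 → Module.Dual ℝ E) (p : Fin 3 → E), IsContactFrame K s w u p := by
  have : FiniteDimensional ℝ E := .of_finrank_pos (by lia)
  have hs_pos : 0 < s := one_pos.trans hs
  obtain ⟨b, p, hsum, hb, h⟩ := exists_isContact (ι := Fin 3) (by simp [hE]) hconv hcomp hint hcent
    hs_pos hopt
  have hpos (i : Fin 3) : 0 < b i (p i) :=
    (h i).apply_pos hint hcent hs_pos (IsContact.ne_zero h hint hs hsum hb i)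
  exact ⟨_, _, p, IsContact.isContactFrame h hs_pos hpos hsum fun _ ↦
    IsContact.eq_zero_of_forall_apply_eq_zero hE h hint hs hsum hb⟩

end Existence

/-! ### Planar convex bodies -/

lemma exists_sub_notMem_smul_of_lt_minkAsym {K : Set E2} {ρ : ℝ} (hρ : 0 < ρ)
    (hlt : ρ < minkAsym K) (t : E2) : ∃ x ∈ K, t - x ∉ ρ • K := by
  by_contra! hall
  refine hlt.not_ge (csInf_le ⟨0, fun r hr ↦ hr.1.le⟩ ⟨hρ, (1 + ρ)⁻¹ • t, ?_⟩)
  rintro _ ⟨x, hx, c, rfl, rfl⟩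
  obtain ⟨k, hk, hkx⟩ := hall x hx
  refine ⟨(1 + ρ)⁻¹ • t - k, ⟨_, rfl, k, hk, rfl⟩, ?_⟩
  have ht : (1 + ρ) • (1 + ρ)⁻¹ • t = t := smul_inv_smul₀ (by positivity) t
  rw [add_smul, one_smul] at ht
  simp only [smul_sub, hkx]
  nth_rewrite 2 [← ht]
  abel

lemma tauB_le {K : Set E2} {c : ℝ} (hc : 0 < c) (h : ∀ x, x ∈ K → -x ∈ K → (2 / c) • x ∈ K - K) :
    tauB K ≤ c := by
  refine csInf_le ⟨0, fun r hr ↦ hr.1.le⟩ ⟨hc, fun x hx ↦ ?_⟩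
  rw [smul_smul, mem_smul_set_iff_inv_smul_mem₀ (by positivity), mul_inv, inv_inv, mul_comm,
    ← div_eq_mul_inv]
  exact h x hx.1 hx.2

theorem stmt11 (K : Set E2) (hK : IsConvexBody K) (hc : MinkCentered K)
    (hs : phiR < minkAsym K) :
    tauB K ≤ cFun (minkAsym K) := by
  obtain ⟨hconv, hcomp, hint⟩ := hK
  obtain ⟨w, u, p, hframe⟩ := exists_isContactFrame finrank_euclideanSpace_fin hconv hcomp hint hc
    (one_lt_phiR.trans hs) fun ρ hρ ↦ exists_sub_notMem_smul_of_lt_minkAsym hρ.1 hρ.2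
  exact tauB_le (cFun_pos hs hframe.le_two) fun x hx hnx ↦ hframe.smul_mem_sub hconv hs hx hnx
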